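/- Let S be a set of n ≥ 3 points in the plane in convex position. Then for every tree T ∈ 𝒯(S), exactly 2(n − 2) distinct trees in 𝒯(S) can be obtained from T by a single edge slide; that is, the edge-slide transition graph on 𝒯(S) (and likewise on the edge-labeled trees ℒ(S)) is 2(n − 2)-regular. -/

import Mathlib

open scoped Classical

noncomputable section

/-- Points in the plane. -/
abbrev Pt : Type := ℝ × ℝ

/-- The closed straight-line segment spanned by an (unordered) edge. -/
def segOf (e : Sym2 Pt) : Set Pt :=
  Sym2.lift ⟨fun p q => segment ℝ p q, fun p q => segment_symm ℝ p q⟩ e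

/-- The set of endpoints of an edge. -/
def epts (e : Sym2 Pt) : Set Pt := {p | p ∈ e}

/-- Two edges intersect in at most common endpoints (they do not cross). -/
def NoCrossPair (e f : Sym2 Pt) : Prop := segOf e ∩ segOf f ⊆ epts e ∩ epts f

/-- A set of edges is noncrossing: any two distinct edges meet in at most a common endpoint. -/
def NoCross (E : Finset (Sym2 Pt)) : Prop := ∀ e ∈ E, ∀ f ∈ E, e ≠ f → NoCrossPair e f

/-- `E` is the edge set of a noncrossing straight-line spanning tree on the point set `S`:
all edges are nondegenerate with endpoints in `S`, pairwise noncrossing, there are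
`|S| - 1` of them, and they connect all of `S`. -/
def IsPST (S : Finset Pt) (E : Finset (Sym2 Pt)) : Prop :=
  (∀ e ∈ E, ¬ e.IsDiag ∧ ∀ p ∈ e, p ∈ S) ∧
  NoCross E ∧ E.card + 1 = S.card ∧
  ∀ p ∈ S, ∀ q ∈ S, Relation.ReflTransGen (fun a b => s(a, b) ∈ E) p q

/-- `S` is in general position: no three of its points are collinear. -/
def GenPos (S : Finset Pt) : Prop :=
  ∀ p ∈ S, ∀ q ∈ S, ∀ r ∈ S, p ≠ q → p ≠ r → q ≠ r → ¬ Collinear ℝ ({p, q, r} : Set Pt)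

/-- `S` is in convex position: every point of `S` is a vertex of the convex hull of `S`. -/
def ConvexPos (S : Finset Pt) : Prop :=
  ∀ p ∈ S, p ∉ convexHull ℝ ((S : Set Pt) \ {p})

/-- The open interior of the triangle with vertices `p`, `q`, `r`. -/
def triInt (p q r : Pt) : Set Pt := interior (convexHull ℝ ({p, q, r} : Set Pt))

/-- `y` can be reached from `x` by a sequence of at most `m` `step`-operations. -/
def ReachesIn {α : Type*} (step : α → α → Prop) (m : ℕ) (x y : α) : Prop :=
  ∃ k ≤ m, ∃ f : ℕ → α, f 0 = x ∧ f k = y ∧ ∀ i < k, step (f i) (f (i + 1))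

/-- A simultaneous rotation from `E₁` to `E₂`: a bijection `π` between the removed and the
inserted edges such that each `e` shares an endpoint with `π e` and `π e` crosses no edge
of `E₁`. -/
def SimRotation (S : Finset Pt) (E₁ E₂ : Finset (Sym2 Pt)) : Prop :=
  IsPST S E₁ ∧ IsPST S E₂ ∧ ∃ π : Sym2 Pt → Sym2 Pt,
    Set.BijOn π ↑(E₁ \ E₂) ↑(E₂ \ E₁) ∧
    ∀ e ∈ E₁ \ E₂, (∃ p, p ∈ e ∧ p ∈ π e) ∧ ∀ f ∈ E₁, NoCrossPair (π e) f

/-- An empty-triangle rotation replaces an edge `pq` by an adjacent edge `pr` such that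
no edge of either tree meets the interior of the triangle `pqr`. -/
def EmptyTriRot (S : Finset Pt) (E₁ E₂ : Finset (Sym2 Pt)) : Prop :=
  IsPST S E₁ ∧ IsPST S E₂ ∧ ∃ p q r : Pt,
    E₁ \ E₂ = {s(p, q)} ∧ E₂ \ E₁ = {s(p, r)} ∧
    ∀ g ∈ E₁ ∪ E₂, Disjoint (segOf g) (triInt p q r)

/-- A simultaneous empty-triangle rotation. -/
def SimEmptyTriRot (S : Finset Pt) (E₁ E₂ : Finset (Sym2 Pt)) : Prop :=
  IsPST S E₁ ∧ IsPST S E₂ ∧ ∃ π : Sym2 Pt → Sym2 Pt,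
    Set.BijOn π ↑(E₁ \ E₂) ↑(E₂ \ E₁) ∧
    ∀ e ∈ E₁ \ E₂, ∃ p q r : Pt, e = s(p, q) ∧ π e = s(p, r) ∧
      ∀ g ∈ E₁ ∪ E₂, Disjoint (segOf g) (triInt p q r)

/-- An edge slide replaces `pq` by `pr`, where `qr` is an edge of both trees and no edge of
either tree meets the interior of the triangle `pqr`. -/
def EdgeSlide (S : Finset Pt) (E₁ E₂ : Finset (Sym2 Pt)) : Prop :=
  IsPST S E₁ ∧ IsPST S E₂ ∧ ∃ p q r : Pt,
    E₁ \ E₂ = {s(p, q)} ∧ E₂ \ E₁ = {s(p, r)} ∧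
    s(q, r) ∈ E₁ ∧ s(q, r) ∈ E₂ ∧
    ∀ g ∈ E₁ ∪ E₂, Disjoint (segOf g) (triInt p q r)

/-- A simultaneous edge slide. -/
def SimEdgeSlide (S : Finset Pt) (E₁ E₂ : Finset (Sym2 Pt)) : Prop :=
  IsPST S E₁ ∧ IsPST S E₂ ∧ ∃ π : Sym2 Pt → Sym2 Pt,
    Set.BijOn π ↑(E₁ \ E₂) ↑(E₂ \ E₁) ∧
    ∀ e ∈ E₁ \ E₂, ∃ p q r : Pt, e = s(p, q) ∧ π e = s(p, r) ∧
      s(q, r) ∈ E₁ ∧ s(q, r) ∈ E₂ ∧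
      ∀ g ∈ E₁ ∪ E₂, Disjoint (segOf g) (triInt p q r)

/-- `e` is an edge of the convex hull of `S`: it joins two distinct points of `S` and its
segment lies on the boundary of the convex hull of `S`. -/
def IsHullEdge (S : Finset Pt) (e : Sym2 Pt) : Prop :=
  ∃ u v : Pt, e = s(u, v) ∧ u ∈ S ∧ v ∈ S ∧ u ≠ v ∧
    segment ℝ u v ⊆ frontier (convexHull ℝ (S : Set Pt))

/-- The spanning star centered at `v`. -/
def starAt (S : Finset Pt) (v : Pt) : Finset (Sym2 Pt) := (S.erase v).image (fun w => s(v, w))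

/-- An edge-labeled tree: an edge set together with a labeling function. -/
abbrev LTree := Finset (Sym2 Pt) × (Sym2 Pt → ℕ)

/-- `T` is an edge-labeled noncrossing straight-line spanning tree on `S`: its edge set is in
`𝒯(S)` and its labeling is a bijection from the edges onto `{1, …, |S| - 1}`
(normalized to `0` on non-edges). -/
def IsLabeledPST (S : Finset Pt) (T : LTree) : Prop :=
  IsPST S T.1 ∧ Set.BijOn T.2 ↑T.1 (Set.Icc 1 (S.card - 1)) ∧ ∀ e, e ∉ T.1 → T.2 e = 0

/-- A simultaneous exchange on edge-labeled trees: an arbitrary bijection between removed and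
inserted edges transferring labels, all common edges keeping their labels. -/
def LabSimExchange (S : Finset Pt) (T₁ T₂ : LTree) : Prop :=
  IsLabeledPST S T₁ ∧ IsLabeledPST S T₂ ∧ ∃ π : Sym2 Pt → Sym2 Pt,
    Set.BijOn π ↑(T₁.1 \ T₂.1) ↑(T₂.1 \ T₁.1) ∧
    (∀ e ∈ T₁.1 \ T₂.1, T₂.2 (π e) = T₁.2 e) ∧
    ∀ e ∈ T₁.1 ∩ T₂.1, T₂.2 e = T₁.2 e

/-- A rotation on edge-labeled trees: the removed and inserted edges share an endpoint and do
not cross, the label of the removed edge is transferred, and all other labels are kept. -/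
def LabRotation (S : Finset Pt) (T₁ T₂ : LTree) : Prop :=
  IsLabeledPST S T₁ ∧ IsLabeledPST S T₂ ∧ ∃ e₁ e₂ : Sym2 Pt,
    T₁.1 \ T₂.1 = {e₁} ∧ T₂.1 \ T₁.1 = {e₂} ∧
    (∃ p, p ∈ e₁ ∧ p ∈ e₂) ∧ NoCrossPair e₁ e₂ ∧
    T₂.2 e₂ = T₁.2 e₁ ∧ ∀ e ∈ T₁.1 ∩ T₂.1, T₂.2 e = T₁.2 e

/-- An edge slide on edge-labeled trees, transferring the label of the slid edge. -/
def LabEdgeSlide (S : Finset Pt) (T₁ T₂ : LTree) : Prop :=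
  IsLabeledPST S T₁ ∧ IsLabeledPST S T₂ ∧ ∃ p q r : Pt,
    T₁.1 \ T₂.1 = {s(p, q)} ∧ T₂.1 \ T₁.1 = {s(p, r)} ∧
    s(q, r) ∈ T₁.1 ∧ s(q, r) ∈ T₂.1 ∧
    (∀ g ∈ T₁.1 ∪ T₂.1, Disjoint (segOf g) (triInt p q r)) ∧
    T₂.2 (s(p, r)) = T₁.2 (s(p, q)) ∧ ∀ e ∈ T₁.1 ∩ T₂.1, T₂.2 e = T₁.2 e

/-!
For points in convex position the edges of a tree at a vertex `q` are linearly ordered by angle,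
and two segments cross iff the line through one of them separates the endpoints of the other.
Consequently `pq` can slide along `qr` exactly when `qp` and `qr` are consecutive in the order
at `q`: the new edge `pr` is then crossed by no edge of the tree, since a line separating `p` from
`r` and missing `q` would also separate `q` from one of them. A vertex of degree `d` contributes
`2(d - 1)` ordered pairs of consecutive edges, different pairs give different trees, and
`∑ 2(d - 1) = 4(n - 1) - 2n = 2(n - 2)`. In the labeled graph, the labels after a slide are
determined by the slide.
-/

/-- Twice the signed area of the triangle `abc`: positive iff `c` lies strictly to the left of the
directed line `ab`, and zero iff the three points are collinear. -/
def orient (a b c : Pt) : ℝ := (b.1 - a.1) * (c.2 - a.2) - (b.2 - a.2) * (c.1 - a.1)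

/-- The line `ab` strictly separates `c` from `d`. -/
def Separates (a b c d : Pt) : Prop := orient a b c * orient a b d < 0

section Orientation

variable {a b c x : Pt}

@[simp]
theorem orient_left_self (a b : Pt) : orient a b a = 0 := by simp [orient]

@[simp]
theorem orient_right_self (a b : Pt) : orient a b b = 0 := by simp only [orient]; ring

theorem orient_rotate (a b c : Pt) : orient b c a = orient a b c := by simp only [orient]; ring

theorem orient_swap_left (a b c : Pt) : orient b a c = -orient a b c := by
  simp only [orient]; ring

theorem orient_swap_right (a b c : Pt) : orient a c b = -orient a b c := by
  simp only [orient]; ring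

theorem orient_eq_add_add (x a b c : Pt) :
    orient a b c = orient x b c + orient x c a + orient x a b := by
  simp only [orient]; ring

theorem orient_convex_comb (a b c d : Pt) {s t : ℝ} (hst : s + t = 1) :
    orient a b (s • c + t • d) = s * orient a b c + t * orient a b d := by
  obtain rfl : s = 1 - t := by linarith
  simp only [orient, Prod.fst_add, Prod.smul_fst, smul_eq_mul, Prod.snd_add, Prod.smul_snd]
  ring

theorem orient_eq_zero_of_mem_segment (hx : x ∈ segment ℝ a b) : orient a b x = 0 := by
  obtain ⟨s, t, -, -, hst, rfl⟩ := hx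
  simp [orient_convex_comb a b a b hst]

theorem collinear_of_orient_eq_zero (hab : a ≠ b) (h : orient a b c = 0) :
    Collinear ℝ {a, b, c} := by
  have hpos : 0 < (b.1 - a.1) ^ 2 + (b.2 - a.2) ^ 2 := by
    contrapose! hab
    ext <;> nlinarith [sq_nonneg (b.1 - a.1), sq_nonneg (b.2 - a.2)]
  set t := ((b.1 - a.1) * (c.1 - a.1) + (b.2 - a.2) * (c.2 - a.2)) /
    ((b.1 - a.1) ^ 2 + (b.2 - a.2) ^ 2) with ht
  have hc : c = t • (b - a) +ᵥ a := by
    simp only [orient] at h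
    ext <;> simp only [ht, vadd_eq_add, Prod.fst_add, Prod.snd_add, Prod.smul_fst, Prod.smul_snd,
      Prod.fst_sub, Prod.snd_sub, smul_eq_mul] <;> field_simp
    · linear_combination (-(b.2 - a.2)) * h
    · linear_combination (b.1 - a.1) * h
  rw [collinear_iff_of_mem (Set.mem_insert a _)]
  refine ⟨b - a, ?_⟩
  simp only [Set.forall_mem_insert, Set.mem_singleton_iff, forall_eq]
  exact ⟨⟨0, by simp⟩, ⟨1, by simp⟩, ⟨t, hc⟩⟩

/-- Barycentric coordinates are ratios of signed areas. -/
theorem mem_convexHull_of_orient_nonneg (habc : 0 < orient a b c) (ha : 0 ≤ orient x b c)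
    (hb : 0 ≤ orient x c a) (hc : 0 ≤ orient x a b) : x ∈ convexHull ℝ {a, b, c} := by
  let w : Fin 3 → ℝ := ![orient x b c / orient a b c, orient x c a / orient a b c,
    orient x a b / orient a b c]
  have hw : ∀ i ∈ Finset.univ, 0 ≤ w i := by
    simp only [Finset.mem_univ, forall_const, Fin.forall_fin_succ, IsEmpty.forall_iff, and_true]
    exact ⟨div_nonneg ha habc.le, div_nonneg hb habc.le, div_nonneg hc habc.le⟩
  have hsum : ∑ i, w i = 1 := by
    rw [Fin.sum_univ_three]
    change _ / _ + _ / _ + _ / _ = (1 : ℝ)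
    rw [← add_div, ← add_div, ← orient_eq_add_add, div_self habc.ne']
  have hx : ∑ i, w i • ![a, b, c] i = x := by
    rw [Fin.sum_univ_three]
    ext <;> simp only [w, Matrix.cons_val, Prod.fst_add, Prod.snd_add, Prod.smul_fst,
      Prod.smul_snd, smul_eq_mul] <;> field_simp <;> simp only [orient] <;> ring
  rw [← hx]
  refine (convex_convexHull ℝ _).sum_mem hw hsum fun i _ => subset_convexHull ℝ _ ?_
  fin_cases i <;> simp

end Orientation

section Separation

variable {a b c d : Pt}

theorem separates_swap_left : Separates b a c d ↔ Separates a b c d := by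
  simp only [Separates, orient_swap_left a b, neg_mul_neg]

theorem separates_swap_right : Separates a b d c ↔ Separates a b c d := by
  simp only [Separates, mul_comm]

theorem not_separates_self : ¬ Separates a b c c := by
  simp only [Separates, not_lt, mul_self_nonneg]

end Separation

namespace ConvexPos

variable {S : Finset Pt} {a b c d x : Pt}

theorem not_wbtw (hS : ConvexPos S) (ha : a ∈ S) (hb : b ∈ S) (hx : x ∈ S) (hxa : x ≠ a)
    (hxb : x ≠ b) : ¬ Wbtw ℝ a x b := fun h =>
  hS x hx <| segment_subset_convexHull (s := (S : Set Pt) \ {x}) ⟨ha, hxa.symm⟩ ⟨hb, hxb.symm⟩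
    h.mem_segment

theorem orient_ne_zero (hS : ConvexPos S) (ha : a ∈ S) (hb : b ∈ S) (hc : c ∈ S)
    (hab : a ≠ b) (hac : a ≠ c) (hbc : b ≠ c) : orient a b c ≠ 0 := fun h => by
  rcases (collinear_of_orient_eq_zero hab h).wbtw_or_wbtw_or_wbtw with h | h | h
  · exact hS.not_wbtw ha hc hb hab.symm hbc h
  · exact hS.not_wbtw hb ha hc hbc.symm hac.symm h
  · exact hS.not_wbtw hc hb ha hac hab h

theorem not_orient_nonneg_pos_pos (hS : ConvexPos S) (hx : x ∈ S) (ha : a ∈ S) (hb : b ∈ S)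
    (hc : c ∈ S) (hbc : 0 ≤ orient x b c) (hca : 0 < orient x c a) : ¬ 0 < orient x a b := by
  intro hab
  have hxa : a ≠ x := by rintro rfl; simp at hca
  have hxb : b ≠ x := by rintro rfl; simp at hab
  have hxc : c ≠ x := by rintro rfl; simp [orient] at hca
  have habc : 0 < orient a b c := by linarith [orient_eq_add_add x a b c]
  have hsub : {a, b, c} ⊆ (S : Set Pt) \ {x} := by
    simp [Set.insert_subset_iff, *]
  exact hS x hx <| convexHull_mono hsub <|
    mem_convexHull_of_orient_nonneg habc hbc hca.le hab.le

theorem orient_pos_trans (hS : ConvexPos S) {q x y z : Pt} (hq : q ∈ S) (hx : x ∈ S) (hy : y ∈ S)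
    (hz : z ∈ S) (hxy : 0 < orient q x y) (hyz : 0 < orient q y z) : 0 < orient q x z := by
  by_contra! hxz
  exact hS.not_orient_nonneg_pos_pos hq hy hz hx
    (by linarith [orient_swap_right q x z]) hxy hyz

theorem orient_neg_and_pos (hS : ConvexPos S) (ha : a ∈ S) (hb : b ∈ S) (hc : c ∈ S) (hd : d ∈ S)
    (habc : 0 < orient a b c) (habd : orient a b d < 0) :
    orient c d a < 0 ∧ 0 < orient c d b := by
  constructor
  · by_contra! hcda
    exact hS.not_orient_nonneg_pos_pos ha hb hc hd (by linarith [orient_rotate a c d])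
      (by linarith [orient_swap_right a b d]) habc
  · by_contra! hcdb
    refine hS.not_orient_nonneg_pos_pos hb ha hd hc ?_ (by linarith [orient_rotate a b c]) ?_
    · linarith [orient_rotate b c d, orient_swap_right b c d]
    · linarith [orient_swap_left a b d]

theorem separates_symm (hS : ConvexPos S) (ha : a ∈ S) (hb : b ∈ S) (hc : c ∈ S) (hd : d ∈ S)
    (h : Separates a b c d) : Separates c d a b := by
  rcases mul_neg_iff.1 h with ⟨habc, habd⟩ | ⟨habc, habd⟩
  · obtain ⟨hcda, hcdb⟩ := hS.orient_neg_and_pos ha hb hc hd habc habd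
    exact mul_neg_of_neg_of_pos hcda hcdb
  · obtain ⟨hdca, hdcb⟩ := hS.orient_neg_and_pos ha hb hd hc habd habc
    exact separates_swap_left.1 (mul_neg_of_neg_of_pos hdca hdcb)

end ConvexPos

section Crossing

variable {a b c d : Pt}

theorem div_sub_nonneg_of_mul_neg {u v : ℝ} (h : u * v < 0) : 0 ≤ u / (u - v) := by
  rcases mul_neg_iff.1 h with ⟨hu, hv⟩ | ⟨hu, hv⟩
  · exact div_nonneg hu.le (by linarith)
  · exact div_nonneg_of_nonpos hu.le (by linarith)

theorem mem_segment_of_mul_neg {u v : ℝ} (h : u * v < 0) :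
    (v / (v - u)) • c + (u / (u - v)) • d ∈ segment ℝ c d := by
  have huv : u - v ≠ 0 := fun h₀ => by
    rw [sub_eq_zero.1 h₀] at h
    exact (mul_self_nonneg v).not_gt h
  refine ⟨_, _, div_sub_nonneg_of_mul_neg (mul_comm u v ▸ h), div_sub_nonneg_of_mul_neg h, ?_, rfl⟩
  rw [← neg_sub u v, div_neg, neg_add_eq_sub, ← sub_div, div_self huv]

theorem exists_mem_segment_inter_segment (hcd : Separates a b c d) (hab : Separates c d a b) :
    ∃ x, x ∈ segment ℝ a b ∩ segment ℝ c d := by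
  refine ⟨_, mem_segment_of_mul_neg hab, ?_⟩
  convert mem_segment_of_mul_neg (c := c) (d := d) hcd using 1
  have hsub : orient c d a - orient c d b = -(orient a b c - orient a b d) := by
    simp only [orient]
    ring
  have hne : orient a b c - orient a b d ≠ 0 := fun h₀ => by
    rw [Separates, sub_eq_zero.1 h₀] at hcd
    exact (mul_self_nonneg _).not_gt hcd
  rw [hsub, ← neg_sub (orient c d a), hsub, neg_neg, ← neg_sub (orient a b c) (orient a b d)]
  ext <;> simp only [Prod.fst_add, Prod.snd_add, Prod.smul_fst, Prod.smul_snd, smul_eq_mul] <;>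
    field_simp <;> simp only [orient] <;> ring

theorem Separates.not_noCrossPair (hcd : Separates a b c d) (hab : Separates c d a b) :
    ¬ NoCrossPair s(a, b) s(c, d) := by
  intro h
  obtain ⟨x, hx⟩ := exists_mem_segment_inter_segment hcd hab
  obtain ⟨-, hxcd⟩ := h hx
  have hx₀ : orient a b x = 0 := orient_eq_zero_of_mem_segment hx.1
  rcases Sym2.mem_iff.1 hxcd with rfl | rfl
  · simp [Separates, hx₀] at hcd
  · simp [Separates, hx₀] at hcd

theorem NoCrossPair.symm {e f : Sym2 Pt} (h : NoCrossPair e f) : NoCrossPair f e := by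
  simpa only [NoCrossPair, Set.inter_comm] using h

namespace ConvexPos

variable {S : Finset Pt}

theorem orient_eq_zero_iff (hS : ConvexPos S) (ha : a ∈ S) (hb : b ∈ S) (hc : c ∈ S)
    (hab : a ≠ b) : orient a b c = 0 ↔ c ∈ s(a, b) := by
  rw [Sym2.mem_iff]
  refine ⟨fun h => ?_, ?_⟩
  · by_contra! hne
    exact hS.orient_ne_zero ha hb hc hab hne.1.symm hne.2.symm h
  · rintro (rfl | rfl) <;> simp

theorem noCrossPair_of_not_separates (hS : ConvexPos S) (ha : a ∈ S) (hb : b ∈ S) (hc : c ∈ S)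
    (hd : d ∈ S) (hab : a ≠ b) (hcd : c ≠ d) (hne : s(a, b) ≠ s(c, d))
    (h : ¬ Separates a b c d) : NoCrossPair s(a, b) s(c, d) := by
  rintro x ⟨hxab, hxcd⟩
  have hx : orient a b x = 0 := orient_eq_zero_of_mem_segment hxab
  have hendpoint : x ∈ s(c, d) := by
    obtain ⟨s, t, hs, ht, hst, rfl⟩ := hxcd
    rw [orient_convex_comb a b c d hst] at hx
    by_contra hmem
    have hs₀ : s ≠ 0 := by rintro rfl; simp_all
    have ht₀ : t ≠ 0 := by rintro rfl; simp_all
    have hc₀ : orient a b c = 0 := by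
      have hsq : s * (orient a b c * orient a b c) = -(t * (orient a b c * orient a b d)) := by
        linear_combination orient a b c * hx
      have hle : s * (orient a b c * orient a b c) ≤ 0 :=
        hsq.trans_le (neg_nonpos.2 (mul_nonneg ht (not_lt.1 h)))
      exact mul_self_eq_zero.1 <| (nonpos_of_mul_nonpos_right hle (hs.lt_of_ne' hs₀)).antisymm
        (mul_self_nonneg _)
    have hd₀ : orient a b d = 0 := by simpa [hc₀, ht₀] using hx
    exact hne <| (Sym2.mem_and_mem_iff hcd).1
      ⟨(hS.orient_eq_zero_iff ha hb hc hab).1 hc₀, (hS.orient_eq_zero_iff ha hb hd hab).1 hd₀⟩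
  have hxS : x ∈ S := by rcases Sym2.mem_iff.1 hendpoint with rfl | rfl <;> assumption
  exact ⟨(hS.orient_eq_zero_iff ha hb hxS hab).1 hx, hendpoint⟩

theorem noCrossPair_iff_not_separates (hS : ConvexPos S) (ha : a ∈ S) (hb : b ∈ S) (hc : c ∈ S)
    (hd : d ∈ S) (hab : a ≠ b) (hcd : c ≠ d) (hne : s(a, b) ≠ s(c, d)) :
    NoCrossPair s(a, b) s(c, d) ↔ ¬ Separates a b c d :=
  ⟨fun h hsep => hsep.not_noCrossPair (hS.separates_symm ha hb hc hd hsep) h,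
    hS.noCrossPair_of_not_separates ha hb hc hd hab hcd hne⟩

end ConvexPos

end Crossing

section Triangles

variable {a b : Pt}

theorem continuous_orient (a b : Pt) : Continuous (orient a b) := by
  unfold orient
  fun_prop

theorem isOpenMap_orient (hab : a ≠ b) : IsOpenMap (orient a b) := by
  let L : Pt →L[ℝ] ℝ := (b.1 - a.1) • ContinuousLinearMap.snd ℝ ℝ ℝ -
    (b.2 - a.2) • ContinuousLinearMap.fst ℝ ℝ ℝ
  have hL : L ≠ 0 := fun h => hab <| by
    have h₁ : b.1 - a.1 = 0 := by simpa [L] using DFunLike.congr_fun h (0, 1)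
    have h₂ : b.2 - a.2 = 0 := by simpa [L, sub_eq_zero, eq_comm] using DFunLike.congr_fun h (1, 0)
    ext <;> linarith
  have horient : orient a b = (· - L a) ∘ L := by
    ext x
    change orient a b x = (b.1 - a.1) * x.2 - (b.2 - a.2) * x.1 -
      ((b.1 - a.1) * a.2 - (b.2 - a.2) * a.1)
    rw [orient]
    ring
  rw [horient]
  exact (Homeomorph.subRight (L a)).isOpenMap.comp (L.isOpenMap_of_ne_zero hL)

theorem orient_pos_of_mem_interior_convexHull {t : Set Pt} {x : Pt} (hab : a ≠ b)
    (ht : ∀ y ∈ t, 0 ≤ orient a b y) (hx : x ∈ interior (convexHull ℝ t)) : 0 < orient a b x := by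
  have hconvex : Convex ℝ (orient a b ⁻¹' Set.Ici 0) := by
    intro y hy z hz s t hs ht hst
    rw [Set.mem_preimage, orient_convex_comb a b y z hst]
    exact add_nonneg (mul_nonneg hs hy) (mul_nonneg ht hz)
  have hsub : interior (convexHull ℝ t) ⊆ orient a b ⁻¹' Set.Ioi 0 := by
    rw [← interior_Ici, (isOpenMap_orient hab).preimage_interior_eq_interior_preimage
      (continuous_orient a b)]
    exact interior_mono (convexHull_min ht hconvex)
  exact hsub hx

theorem disjoint_segment_interior_convexHull {t : Set Pt} (hab : a ≠ b)
    (ht : ∀ x ∈ t, ∀ y ∈ t, ¬ Separates a b x y) :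
    Disjoint (segment ℝ a b) (interior (convexHull ℝ t)) := by
  rw [Set.disjoint_left]
  intro z hz hzt
  have hz₀ : orient a b z = 0 := orient_eq_zero_of_mem_segment hz
  by_cases hpos : ∃ x ∈ t, 0 < orient a b x
  · obtain ⟨x, hx, hx₀⟩ := hpos
    have hside : ∀ y ∈ t, 0 ≤ orient a b y := fun y hy =>
      not_lt.1 fun hy₀ => ht x hx y hy (mul_neg_of_pos_of_neg hx₀ hy₀)
    exact (orient_pos_of_mem_interior_convexHull hab hside hzt).ne' hz₀
  · have hside : ∀ y ∈ t, 0 ≤ orient b a y := fun y hy => by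
      rw [orient_swap_left, neg_nonneg]
      exact not_lt.1 fun hy₀ => hpos ⟨y, hy, hy₀⟩
    have hz₁ := orient_pos_of_mem_interior_convexHull hab.symm hside hzt
    rw [orient_swap_left, hz₀, neg_zero] at hz₁
    exact hz₁.false

end Triangles

section Trees

variable {S : Finset Pt} {E : Finset (Sym2 Pt)} {a b c d : Pt}

namespace IsPST

theorem mem_left (hE : IsPST S E) (h : s(a, b) ∈ E) : a ∈ S :=
  (hE.1 _ h).2 a (Sym2.mem_mk_left a b)

theorem mem_right (hE : IsPST S E) (h : s(a, b) ∈ E) : b ∈ S :=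
  (hE.1 _ h).2 b (Sym2.mem_mk_right a b)

theorem ne (hE : IsPST S E) (h : s(a, b) ∈ E) : a ≠ b :=
  fun hab => (hE.1 _ h).1 (Sym2.mk_isDiag_iff.2 hab)

theorem not_separates (hE : IsPST S E) (hS : ConvexPos S) (hab : s(a, b) ∈ E)
    (hcd : s(c, d) ∈ E) : ¬ Separates a b c d := by
  by_cases hne : s(a, b) = s(c, d)
  · rcases Sym2.eq_iff.1 hne with ⟨rfl, rfl⟩ | ⟨rfl, rfl⟩ <;> simp [Separates]
  · exact (hS.noCrossPair_iff_not_separates (hE.mem_left hab) (hE.mem_right hab)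
      (hE.mem_left hcd) (hE.mem_right hcd) (hE.ne hab) (hE.ne hcd) hne).1 (hE.2.1 _ hab _ hcd hne)

end IsPST

/-- The graph induced by the edge set `E` on the vertex set `S`. -/
def graphOn {V : Type*} (S : Finset V) (E : Finset (Sym2 V)) : SimpleGraph S :=
  (SimpleGraph.fromEdgeSet ↑E).comap Subtype.val

theorem graphOn_adj {V : Type*} {S : Finset V} {E : Finset (Sym2 V)} {x y : S} :
    (graphOn S E).Adj x y ↔ s(x.1, y.1) ∈ E ∧ x ≠ y := by
  simp [graphOn]

namespace IsPST

theorem graphOn_adj_iff (hE : IsPST S E) {x y : S} :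
    (graphOn S E).Adj x y ↔ s(x.1, y.1) ∈ E :=
  graphOn_adj.trans <| and_iff_left_of_imp fun h hxy => hE.ne h (congrArg Subtype.val hxy)

theorem image_edgeFinset_graphOn (hE : IsPST S E) :
    (graphOn S E).edgeFinset.image (Sym2.map Subtype.val) = E := by
  ext e
  induction e with | _ a b
  simp only [Finset.mem_image, SimpleGraph.mem_edgeFinset]
  constructor
  · rintro ⟨f, hf, hfe⟩
    induction f with | _ x y
    rw [← hfe]
    exact hE.graphOn_adj_iff.1 hf
  · intro h
    exact ⟨s(⟨a, hE.mem_left h⟩, ⟨b, hE.mem_right h⟩), hE.graphOn_adj_iff.2 h, rfl⟩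

theorem card_edgeFinset_graphOn (hE : IsPST S E) : (graphOn S E).edgeFinset.card = E.card := by
  rw [← Finset.card_image_of_injective _ (Sym2.map.injective Subtype.val_injective),
    hE.image_edgeFinset_graphOn]

theorem reachable_graphOn (hE : IsPST S E) (x y : S) : (graphOn S E).Reachable x y := by
  suffices h : ∀ b, Relation.ReflTransGen (fun a b => s(a, b) ∈ E) x b →
      ∀ hb : b ∈ S, (graphOn S E).Reachable x ⟨b, hb⟩ from
    h y (hE.2.2.2 x x.2 y y.2) y.2
  intro b hxb
  induction hxb with
  | refl => exact fun _ => .refl _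
  | tail _ hab ih =>
    exact fun hb => (ih (hE.mem_left hab)).trans
      (SimpleGraph.Adj.reachable (hE.graphOn_adj_iff.2 hab))

theorem isTree_graphOn (hE : IsPST S E) : (graphOn S E).IsTree := by
  have hcard : (graphOn S E).edgeFinset.card + 1 = Fintype.card S := by
    rw [hE.card_edgeFinset_graphOn, Fintype.card_coe, hE.2.2.1]
  have : Nonempty S := Fintype.card_pos_iff.1 (by omega)
  rw [SimpleGraph.isTree_iff_connected_and_card]
  refine ⟨⟨hE.reachable_graphOn⟩, ?_⟩
  rwa [Nat.card_eq_fintype_card, Nat.card_eq_fintype_card, ← SimpleGraph.edgeFinset_card]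

theorem notMem_of_mem_of_mem (hE : IsPST S E) (hab : s(a, b) ∈ E) (hbc : s(b, c) ∈ E) :
    s(a, c) ∉ E := fun hac => by
  have hclique : (graphOn S E).IsNClique 3
      {⟨a, hE.mem_left hab⟩, ⟨b, hE.mem_right hab⟩, ⟨c, hE.mem_right hac⟩} := by
    rw [SimpleGraph.is3Clique_triple_iff]
    exact ⟨hE.graphOn_adj_iff.2 hab, hE.graphOn_adj_iff.2 hac, hE.graphOn_adj_iff.2 hbc⟩
  exact hE.isTree_graphOn.isAcyclic.cliqueFree le_rfl _ hclique

end IsPST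

end Trees

section Slides

section EdgeSets

variable {V : Type*} [DecidableEq V] {E E' : Finset (Sym2 V)} {p q r : V} {e : Sym2 V}

/-- The edge set obtained from `E` by sliding the edge `pq` along `qr` to `pr`. -/
def slide (E : Finset (Sym2 V)) (p q r : V) : Finset (Sym2 V) :=
  insert s(p, r) (E.erase s(p, q))

theorem mem_slide : e ∈ slide E p q r ↔ e = s(p, r) ∨ e ≠ s(p, q) ∧ e ∈ E := by
  simp only [slide, Finset.mem_insert, Finset.mem_erase]

theorem sdiff_slide (hpq : s(p, q) ∈ E) (hpr : s(p, r) ∉ E) : E \ slide E p q r = {s(p, q)} := by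
  ext e
  simp only [Finset.mem_sdiff, mem_slide, Finset.mem_singleton]
  grind

theorem slide_sdiff (hpr : s(p, r) ∉ E) : slide E p q r \ E = {s(p, r)} := by
  ext e
  simp only [Finset.mem_sdiff, mem_slide, Finset.mem_singleton]
  grind

theorem eq_slide_of_sdiff_eq (hsub : E \ E' = {s(p, q)}) (hsup : E' \ E = {s(p, r)}) :
    E' = slide E p q r := by
  ext e
  have hpq := Finset.ext_iff.1 hsub e
  have hpr := Finset.ext_iff.1 hsup e
  simp only [Finset.mem_sdiff, Finset.mem_singleton] at hpq hpr
  rw [mem_slide]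
  tauto

theorem card_slide (hpq : s(p, q) ∈ E) (hpr : s(p, r) ∉ E) : (slide E p q r).card = E.card := by
  rw [slide, Finset.card_insert_of_notMem fun h => hpr (Finset.mem_of_mem_erase h),
    Finset.card_erase_add_one hpq]

theorem reflTransGen_slide {x y : V} (hpr : p ≠ r) (hqr : s(q, r) ∈ E)
    (h : Relation.ReflTransGen (fun a b => s(a, b) ∈ E) x y) :
    Relation.ReflTransGen (fun a b => s(a, b) ∈ slide E p q r) x y := by
  have hpr' : s(p, r) ∈ slide E p q r := mem_slide.2 (.inl rfl)
  have hrq' : s(r, q) ∈ slide E p q r :=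
    mem_slide.2 (.inr ⟨mt Sym2.congr_left.1 hpr.symm, Sym2.eq_swap ▸ hqr⟩)
  refine Relation.reflTransGen_closed (fun a b hab => ?_) x y h
  by_cases hpq : s(a, b) = s(p, q)
  · rcases Sym2.eq_iff.1 hpq with ⟨rfl, rfl⟩ | ⟨rfl, rfl⟩
    · exact .head hpr' (.single hrq')
    · exact .head (Sym2.eq_swap ▸ hrq') (.single (Sym2.eq_swap ▸ hpr'))
  · exact .single (mem_slide.2 (.inr ⟨hpq, hab⟩))

end EdgeSets

/-- `qp` and `qr` are distinct edges of `E` that are neighbours in the angular order of the edges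
around `q`: no line through an edge of `E` at `q` separates `p` from `r`. For points in convex
position all edges at `q` lie in a half-plane, so this order is linear. -/
structure ConsecutiveEdges (E : Finset (Sym2 Pt)) (q p r : Pt) : Prop where
  left_mem : s(q, p) ∈ E
  right_mem : s(q, r) ∈ E
  ne : p ≠ r
  not_separates : ∀ y, s(q, y) ∈ E → ¬ Separates q y p r

variable {S : Finset Pt} {E E' : Finset (Sym2 Pt)} {a b p q r : Pt}

namespace ConsecutiveEdges

theorem mem_slid (h : ConsecutiveEdges E q p r) : s(p, q) ∈ E := Sym2.eq_swap ▸ h.left_mem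

theorem notMem (h : ConsecutiveEdges E q p r) (hE : IsPST S E) : s(p, r) ∉ E :=
  hE.notMem_of_mem_of_mem h.mem_slid h.right_mem

theorem not_separates_of_mem (h : ConsecutiveEdges E q p r) (hE : IsPST S E) (hS : ConvexPos S)
    (hab : s(a, b) ∈ E) : ¬ Separates a b p r := by
  intro hpr
  have hqp : ¬ Separates a b q p := hE.not_separates hS hab h.left_mem
  have hqr : ¬ Separates a b q r := hE.not_separates hS hab h.right_mem
  by_cases hq : q ∈ s(a, b)
  · rcases Sym2.mem_iff.1 hq with rfl | rfl
    · exact h.not_separates b hab hpr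
    · exact h.not_separates a (Sym2.eq_swap ▸ hab) (separates_swap_left.2 hpr)
  · have hq₀ : orient a b q ≠ 0 := fun h₀ => hq <|
      (hS.orient_eq_zero_iff (hE.mem_left hab) (hE.mem_right hab) (hE.mem_left h.left_mem)
        (hE.ne hab)).1 h₀
    simp only [Separates, not_lt] at hqp hqr hpr
    have hneg := mul_neg_of_pos_of_neg (pow_two_pos_of_ne_zero hq₀) hpr
    have hnonneg := mul_nonneg hqp hqr
    rw [mul_mul_mul_comm, ← sq] at hnonneg
    exact hneg.not_ge hnonneg

theorem noCrossPair (h : ConsecutiveEdges E q p r) (hE : IsPST S E) (hS : ConvexPos S)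
    {e : Sym2 Pt} (he : e ∈ E) : NoCrossPair e s(p, r) := by
  induction e with | _ a b
  exact hS.noCrossPair_of_not_separates (hE.mem_left he) (hE.mem_right he)
    (hE.mem_right h.left_mem) (hE.mem_right h.right_mem) (hE.ne he) h.ne
    (fun heq => h.notMem hE (heq ▸ he)) (h.not_separates_of_mem hE hS he)

theorem noCross_slide (h : ConsecutiveEdges E q p r) (hE : IsPST S E) (hS : ConvexPos S) :
    NoCross (slide E p q r) := by
  intro e he f hf hef
  rcases mem_slide.1 he with rfl | ⟨-, he⟩ <;> rcases mem_slide.1 hf with rfl | ⟨-, hf⟩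
  · exact absurd rfl hef
  · exact (h.noCrossPair hE hS hf).symm
  · exact h.noCrossPair hE hS he
  · exact hE.2.1 e he f hf hef

theorem isPST_slide (h : ConsecutiveEdges E q p r) (hE : IsPST S E) (hS : ConvexPos S) :
    IsPST S (slide E p q r) := by
  refine ⟨fun e he => ?_, h.noCross_slide hE hS, ?_, fun x hx y hy => ?_⟩
  · rcases mem_slide.1 he with rfl | ⟨-, he⟩
    · simpa using ⟨h.ne, hE.mem_right h.left_mem, hE.mem_right h.right_mem⟩
    · exact hE.1 e he
  · rw [card_slide h.mem_slid (h.notMem hE), hE.2.2.1]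
  · exact reflTransGen_slide h.ne h.right_mem (hE.2.2.2 x hx y hy)

theorem disjoint_segOf_triInt (h : ConsecutiveEdges E q p r) (hE : IsPST S E) (hS : ConvexPos S)
    {g : Sym2 Pt} (hg : g ∈ E ∪ slide E p q r) : Disjoint (segOf g) (triInt p q r) := by
  induction g with | _ a b
  have hab : s(a, b) ∈ E ∨ s(a, b) = s(p, r) := by
    rw [Finset.mem_union, mem_slide] at hg
    tauto
  have hne : a ≠ b := by
    rcases hab with hab | hab
    · exact hE.ne hab
    · rcases Sym2.eq_iff.1 hab with ⟨rfl, rfl⟩ | ⟨rfl, rfl⟩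
      exacts [h.ne, h.ne.symm]
  have hpq : ¬ Separates a b p q ∧ ¬ Separates a b q r ∧ ¬ Separates a b p r := by
    rcases hab with hab | hab
    · exact ⟨hE.not_separates hS hab h.mem_slid, hE.not_separates hS hab h.right_mem,
        h.not_separates_of_mem hE hS hab⟩
    · rcases Sym2.eq_iff.1 hab with ⟨rfl, rfl⟩ | ⟨rfl, rfl⟩ <;> simp [Separates]
  refine disjoint_segment_interior_convexHull hne ?_
  simp only [Set.forall_mem_insert, Set.mem_singleton_iff, forall_eq, not_separates_self,
    not_false_eq_true, true_and, and_true, separates_swap_right (c := p) (d := q),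
    separates_swap_right (c := q) (d := r), separates_swap_right (c := p) (d := r)]
  tauto

theorem edgeSlide (h : ConsecutiveEdges E q p r) (hE : IsPST S E) (hS : ConvexPos S) :
    EdgeSlide S E (slide E p q r) := by
  refine ⟨hE, h.isPST_slide hE hS, p, q, r, sdiff_slide h.mem_slid (h.notMem hE),
    slide_sdiff (h.notMem hE), h.right_mem, mem_slide.2 (.inr ⟨?_, h.right_mem⟩),
    fun g hg => h.disjoint_segOf_triInt hE hS hg⟩
  rw [Sym2.eq_swap]
  exact mt Sym2.congr_left.1 h.ne.symm

end ConsecutiveEdges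

theorem EdgeSlide.exists_consecutiveEdges (hS : ConvexPos S) (h : EdgeSlide S E E') :
    ∃ q p r, ConsecutiveEdges E q p r ∧ slide E p q r = E' := by
  obtain ⟨-, hE', p, q, r, hsub, hsup, hqr, -, -⟩ := h
  have hpq : s(p, q) ∈ E \ E' := hsub ▸ Finset.mem_singleton_self _
  have hpr : s(p, r) ∈ E' \ E := hsup ▸ Finset.mem_singleton_self _
  rw [Finset.mem_sdiff] at hpq hpr
  refine ⟨q, p, r, ⟨Sym2.eq_swap ▸ hpq.1, hqr, hE'.ne hpr.1, fun y hqy => ?_⟩,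
    (eq_slide_of_sdiff_eq hsub hsup).symm⟩
  by_cases hqy' : s(q, y) ∈ E'
  · exact hE'.not_separates hS hqy' hpr.1
  · have hmem : s(q, y) ∈ E \ E' := Finset.mem_sdiff.2 ⟨hqy, hqy'⟩
    rw [hsub, Finset.mem_singleton, Sym2.eq_swap, Sym2.congr_left] at hmem
    simp [Separates, hmem]

theorem slide_injOn (hE : IsPST S E) :
    {t : Pt × Pt × Pt | ConsecutiveEdges E t.1 t.2.1 t.2.2}.InjOn
      fun t => slide E t.2.1 t.1 t.2.2 := by
  rintro ⟨q, p, r⟩ h ⟨q', p', r'⟩ h' heq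
  simp only [Set.mem_ofPred_eq] at h h' heq
  have hremoved : s(p, q) = s(p', q') := by
    rw [← Finset.singleton_inj, ← sdiff_slide h.mem_slid (h.notMem hE), heq,
      sdiff_slide h'.mem_slid (h'.notMem hE)]
  have hinserted : s(p, r) = s(p', r') := by
    rw [← Finset.singleton_inj, ← slide_sdiff (q := q) (h.notMem hE), heq,
      slide_sdiff (h'.notMem hE)]
  have hpq : p ≠ q := hE.ne h.mem_slid
  have hqr : q ≠ r := hE.ne h.right_mem
  simp only [Sym2.eq_iff] at hremoved hinserted
  grind

theorem image_slide_consecutiveEdges (hE : IsPST S E) (hS : ConvexPos S) :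
    (fun t : Pt × Pt × Pt => slide E t.2.1 t.1 t.2.2) ''
      {t | ConsecutiveEdges E t.1 t.2.1 t.2.2} = {E' | EdgeSlide S E E'} := by
  ext E'
  constructor
  · rintro ⟨t, ht, rfl⟩
    exact ht.edgeSlide hE hS
  · intro h
    obtain ⟨q, p, r, hqpr, hslide⟩ := h.exists_consecutiveEdges hS
    exact ⟨(q, p, r), hqpr, hslide⟩

theorem ncard_edgeSlide_eq_ncard_consecutiveEdges (hE : IsPST S E) (hS : ConvexPos S) :
    {E' | EdgeSlide S E E'}.ncard =
      {t : Pt × Pt × Pt | ConsecutiveEdges E t.1 t.2.1 t.2.2}.ncard := by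
  rw [← image_slide_consecutiveEdges hE hS, (slide_injOn hE).ncard_image]

end Slides

section Covers

variable {α : Type*}

section LinearOrder

variable [LinearOrder α]

theorem covBy_or_covBy_iff {x y : α} : x ⋖ y ∨ y ⋖ x ↔
    x ≠ y ∧ ∀ z, ¬ (x < z ∧ z < y) ∧ ¬ (y < z ∧ z < x) := by
  constructor
  · rintro (h | h)
    · exact ⟨h.ne, fun z => ⟨fun hz => h.2 hz.1 hz.2, fun hz => (hz.1.trans hz.2).asymm h.lt⟩⟩
    · exact ⟨h.ne', fun z => ⟨fun hz => (hz.1.trans hz.2).asymm h.lt, fun hz => h.2 hz.1 hz.2⟩⟩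
  · rintro ⟨hne, hz⟩
    rcases hne.lt_or_gt with h | h
    · exact .inl ⟨h, fun z hxz hzy => (hz z).1 ⟨hxz, hzy⟩⟩
    · exact .inr ⟨h, fun z hyz hzx => (hz z).2 ⟨hyz, hzx⟩⟩

variable [Finite α]

theorem image_snd_setOf_covBy {m : α} (hm : ∀ x, m ≤ x) :
    Prod.snd '' {x : α × α | x.1 ⋖ x.2} = {m}ᶜ := by
  ext y
  simp only [Set.mem_image, Set.mem_ofPred_eq, Prod.exists, exists_eq_right, Set.mem_compl_iff,
    Set.mem_singleton_iff]
  constructor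
  · rintro ⟨x, hxy⟩ rfl
    exact (hm x).not_gt hxy.lt
  · intro hy
    obtain ⟨x, -, hxy⟩ := exists_le_covBy_of_lt ((hm y).lt_of_ne' hy)
    exact ⟨x, hxy⟩

theorem ncard_setOf_covBy_add_one [Nonempty α] :
    {x : α × α | x.1 ⋖ x.2}.ncard + 1 = Nat.card α := by
  obtain ⟨m, hm⟩ : ∃ m : α, ∀ x, m ≤ x := Finite.exists_min id
  have hinj : {x : α × α | x.1 ⋖ x.2}.InjOn Prod.snd := fun x hx y hy hxy =>
    Prod.ext (CovBy.unique_left hx (hxy ▸ hy)) hxy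
  rw [← hinj.ncard_image, image_snd_setOf_covBy hm, add_comm,
    ← Set.ncard_singleton m, Set.ncard_add_ncard_compl]

theorem ncard_setOf_covBy_or_covBy_add_two [Nonempty α] :
    {x : α × α | x.1 ⋖ x.2 ∨ x.2 ⋖ x.1}.ncard + 2 = 2 * Nat.card α := by
  have hswap : {x : α × α | x.2 ⋖ x.1} = Prod.swap '' {x | x.1 ⋖ x.2} := by
    rw [Set.image_swap_eq_preimage_swap]
    rfl
  have hdisj : Disjoint {x : α × α | x.1 ⋖ x.2} {x | x.2 ⋖ x.1} :=
    Set.disjoint_left.2 fun _ h h' => h.lt.asymm h'.lt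
  rw [Set.ofPred_or, Set.ncard_union_eq hdisj, hswap,
    Set.ncard_image_of_injective _ Prod.swap_injective, ← ncard_setOf_covBy_add_one]
  ring

end LinearOrder

theorem ncard_setOf_not_between_add_two [Finite α] [Nonempty α] (r : α → α → Prop)
    [IsStrictTotalOrder α r] :
    {x : α × α | x.1 ≠ x.2 ∧ ∀ z, ¬ (r x.1 z ∧ r z x.2) ∧ ¬ (r x.2 z ∧ r z x.1)}.ncard + 2 =
      2 * Nat.card α := by
  let := linearOrderOfSTO r
  rw [← ncard_setOf_covBy_or_covBy_add_two]
  simp only [covBy_or_covBy_iff]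
  rfl

end Covers

section Counting

variable {S : Finset Pt} {E : Finset (Sym2 Pt)} {q : Pt}

theorem separates_iff_orient_pos {q y p r : Pt} : Separates q y p r ↔
    0 < orient q p y ∧ 0 < orient q y r ∨ 0 < orient q r y ∧ 0 < orient q y p := by
  rw [Separates, mul_neg_iff, orient_swap_right q y p, orient_swap_right q y r, neg_pos, neg_pos]
  tauto

namespace IsPST

theorem isStrictTotalOrder_orient (hE : IsPST S E) (hS : ConvexPos S) (q : Pt) :
    IsStrictTotalOrder {y // s(q, y) ∈ E} fun x y => 0 < orient q x y where
  irrefl x := by simp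
  trans x y z hxy hyz := hS.orient_pos_trans (hE.mem_left x.2) (hE.mem_right x.2)
    (hE.mem_right y.2) (hE.mem_right z.2) hxy hyz
  trichotomous x y hxy hyx := by
    by_contra hne
    rw [orient_swap_right, neg_pos] at hyx
    exact hS.orient_ne_zero (hE.mem_left x.2) (hE.mem_right x.2) (hE.mem_right y.2) (hE.ne x.2)
      (hE.ne y.2) (Subtype.coe_ne_coe.2 hne) (by linarith)

theorem consecutiveEdges_iff_not_between {x y : {y // s(q, y) ∈ E}} :
    ConsecutiveEdges E q x y ↔ x ≠ y ∧ ∀ z : {y // s(q, y) ∈ E},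
      ¬ (0 < orient q x z ∧ 0 < orient q z y) ∧ ¬ (0 < orient q y z ∧ 0 < orient q z x) := by
  simp only [← not_or, ← separates_iff_orient_pos, ← Subtype.coe_ne_coe, Subtype.forall]
  exact ⟨fun h => ⟨h.ne, h.not_separates⟩, fun h => ⟨x.2, y.2, h.1, h.2⟩⟩

theorem natCard_neighbors (hE : IsPST S E) (q : S) :
    Nat.card {y // s(q.1, y) ∈ E} = (graphOn S E).degree q := by
  rw [← SimpleGraph.card_neighborSet_eq_degree, ← Nat.card_eq_fintype_card]
  exact Nat.card_congr
    { toFun y := ⟨⟨y, hE.mem_right y.2⟩, hE.graphOn_adj_iff.2 y.2⟩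
      invFun y := ⟨y, hE.graphOn_adj_iff.1 y.2⟩ }

theorem ncard_consecutiveEdges_add_two (hE : IsPST S E) (hS : ConvexPos S)
    (hcard : 2 ≤ S.card) (q : S) :
    {x : Pt × Pt | ConsecutiveEdges E q x.1 x.2}.ncard + 2 = 2 * (graphOn S E).degree q := by
  have := hE.isStrictTotalOrder_orient hS q
  have hdeg : 0 < (graphOn S E).degree q := by
    have : Nontrivial S := Finset.one_lt_card_iff_nontrivial.1 hcard |>.coe_sort
    exact hE.isTree_graphOn.connected.preconnected.degree_pos_of_nontrivial q
  rw [← hE.natCard_neighbors] at hdeg ⊢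
  obtain ⟨_, _⟩ := Nat.card_pos_iff.1 hdeg
  have himage : {x : Pt × Pt | ConsecutiveEdges E q x.1 x.2} = Prod.map Subtype.val Subtype.val ''
      {x : {y // s(q.1, y) ∈ E} × {y // s(q.1, y) ∈ E} | ConsecutiveEdges E q x.1 x.2} := by
    ext ⟨p, r⟩
    constructor
    · intro h
      exact ⟨(⟨p, h.left_mem⟩, ⟨r, h.right_mem⟩), h, rfl⟩
    · rintro ⟨x, h, heq⟩
      exact heq ▸ h
  rw [himage, Set.ncard_image_of_injective _ (Subtype.val_injective.prodMap Subtype.val_injective),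
    ← ncard_setOf_not_between_add_two fun x y : {y // s(q.1, y) ∈ E} => 0 < orient q x y]
  simp only [consecutiveEdges_iff_not_between]

theorem ncard_consecutiveEdges_eq_sum (hE : IsPST S E) :
    {t : Pt × Pt × Pt | ConsecutiveEdges E t.1 t.2.1 t.2.2}.ncard =
      ∑ q : S, {x : Pt × Pt | ConsecutiveEdges E q x.1 x.2}.ncard := by
  have hfin (q : S) : Finite {x : Pt × Pt | ConsecutiveEdges E q x.1 x.2} :=
    (S ×ˢ S).finite_toSet.subset fun x hx =>
      Finset.mem_product.2 ⟨hE.mem_right hx.left_mem, hE.mem_right hx.right_mem⟩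
  simp only [← Nat.card_coe_set_eq]
  rw [← Nat.card_sigma]
  exact Nat.card_congr
    { toFun t := ⟨⟨t.1.1, hE.mem_left t.2.left_mem⟩, ⟨t.1.2, t.2⟩⟩
      invFun t := ⟨(t.1, t.2.1), t.2.2⟩ }

theorem ncard_consecutiveEdges (hE : IsPST S E) (hS : ConvexPos S) (hcard : 2 ≤ S.card) :
    {t : Pt × Pt × Pt | ConsecutiveEdges E t.1 t.2.1 t.2.2}.ncard = 2 * (S.card - 2) := by
  have hsum : ∑ q : S, ({x : Pt × Pt | ConsecutiveEdges E q x.1 x.2}.ncard + 2) =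
      2 * (2 * E.card) := by
    rw [Finset.sum_congr rfl fun q _ => hE.ncard_consecutiveEdges_add_two hS hcard q,
      ← Finset.mul_sum, SimpleGraph.sum_degrees_eq_twice_card_edges, hE.card_edgeFinset_graphOn]
  rw [Finset.sum_add_distrib, ← hE.ncard_consecutiveEdges_eq_sum, Finset.sum_const,
    Finset.card_univ, Fintype.card_coe, smul_eq_mul] at hsum
  have := hE.2.2.1
  omega

end IsPST

end Counting

section Labels

theorem swap_mem_iff_of_sdiff_eq {α : Type*} [DecidableEq α] {A B : Finset α} {x y : α}
    (hsub : A \ B = {x}) (hsup : B \ A = {y}) (e : α) : Equiv.swap x y e ∈ A ↔ e ∈ B := by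
  have hx := Finset.ext_iff.1 hsub
  have hy := Finset.ext_iff.1 hsup
  simp only [Finset.mem_sdiff, Finset.mem_singleton] at hx hy
  rw [Equiv.swap_apply_def]
  split_ifs <;> grind

variable {S : Finset Pt} {E E' : Finset (Sym2 Pt)} {L L₁ L₂ : Sym2 Pt → ℕ}

theorem LabEdgeSlide.edgeSlide {T T' : LTree} (h : LabEdgeSlide S T T') : EdgeSlide S T.1 T'.1 := by
  obtain ⟨hT, hT', p, q, r, hsub, hsup, hqr, hqr', hempty, -⟩ := h
  exact ⟨hT.1, hT'.1, p, q, r, hsub, hsup, hqr, hqr', hempty⟩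

theorem EdgeSlide.exists_labEdgeSlide (h : EdgeSlide S E E') (hL : IsLabeledPST S (E, L)) :
    ∃ L', LabEdgeSlide S (E, L) (E', L') := by
  obtain ⟨-, hE', p, q, r, hsub, hsup, hqr, hqr', hempty⟩ := h
  have hpq : s(p, q) ∈ E \ E' := hsub ▸ Finset.mem_singleton_self _
  have hpr : s(p, r) ∈ E' \ E := hsup ▸ Finset.mem_singleton_self _
  rw [Finset.mem_sdiff] at hpq hpr
  have hswap := swap_mem_iff_of_sdiff_eq hsub hsup
  refine ⟨L ∘ Equiv.swap s(p, q) s(p, r), hL,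
    ⟨hE', hL.2.1.comp (Equiv.bijOn _ hswap), fun e he => hL.2.2 _ (mt (hswap e).1 he)⟩,
    p, q, r, hsub, hsup, hqr, hqr', hempty, ?_, fun e he => ?_⟩
  · exact congrArg L (Equiv.swap_apply_right _ _)
  · rw [Finset.mem_inter] at he
    exact congrArg L <| Equiv.swap_apply_of_ne_of_ne (ne_of_mem_of_not_mem he.2 hpq.2)
      (ne_of_mem_of_not_mem he.1 hpr.2)

theorem LabEdgeSlide.label_unique (h₁ : LabEdgeSlide S (E, L) (E', L₁))
    (h₂ : LabEdgeSlide S (E, L) (E', L₂)) : L₁ = L₂ := by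
  obtain ⟨-, hL₁, p₁, q₁, r₁, hsub₁, hsup₁, -, -, -, hslid₁, hkept₁⟩ := h₁
  obtain ⟨-, hL₂, p₂, q₂, r₂, hsub₂, hsup₂, -, -, -, hslid₂, hkept₂⟩ := h₂
  have hremoved : s(p₁, q₁) = s(p₂, q₂) := Finset.singleton_injective (hsub₁.symm.trans hsub₂)
  have hinserted : s(p₁, r₁) = s(p₂, r₂) := Finset.singleton_injective (hsup₁.symm.trans hsup₂)
  ext e
  by_cases he' : e ∈ E'
  · by_cases he : e ∈ E
    · have hmem : e ∈ E ∩ E' := Finset.mem_inter.2 ⟨he, he'⟩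
      exact (hkept₁ e hmem).trans (hkept₂ e hmem).symm
    · have hmem : e ∈ E' \ E := Finset.mem_sdiff.2 ⟨he', he⟩
      obtain rfl : e = s(p₁, r₁) := Finset.mem_singleton.1 (hsup₁ ▸ hmem)
      calc L₁ s(p₁, r₁) = L s(p₁, q₁) := hslid₁
        _ = L s(p₂, q₂) := by rw [hremoved]
        _ = L₂ s(p₂, r₂) := hslid₂.symm
        _ = L₂ s(p₁, r₁) := by rw [hinserted]
  · exact (hL₁.2.2 e he').trans (hL₂.2.2 e he').symm

theorem ncard_labEdgeSlide_eq_ncard_edgeSlide (hL : IsLabeledPST S (E, L)) :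
    {T' : LTree | LabEdgeSlide S (E, L) T'}.ncard = {E' | EdgeSlide S E E'}.ncard := by
  have himage : Prod.fst '' {T' : LTree | LabEdgeSlide S (E, L) T'} = {E' | EdgeSlide S E E'} := by
    ext E'
    constructor
    · rintro ⟨T', hT', rfl⟩
      exact hT'.edgeSlide
    · intro h
      obtain ⟨L', hL'⟩ := h.exists_labEdgeSlide hL
      exact ⟨(E', L'), hL', rfl⟩
  have hinj : {T' : LTree | LabEdgeSlide S (E, L) T'}.InjOn Prod.fst := by
    rintro ⟨E₁, L₁⟩ h₁ ⟨E₂, L₂⟩ h₂ rfl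
    rw [h₁.label_unique h₂]
  rw [← himage, hinj.ncard_image]

end Labels

/-- on `n ≥ 3` points in convex position, every tree has exactly `2(n - 2)`
edge-slide neighbors, both in the unlabeled and in the edge-labeled transition graph. -/
theorem stmt_19 :
    ∀ S : Finset Pt, 3 ≤ S.card → ConvexPos S →
      ∀ E : Finset (Sym2 Pt), IsPST S E →
        {E' : Finset (Sym2 Pt) | EdgeSlide S E E'}.ncard = 2 * (S.card - 2) ∧
        ∀ L : Sym2 Pt → ℕ, IsLabeledPST S (E, L) →
          {T' : LTree | LabEdgeSlide S (E, L) T'}.ncard = 2 * (S.card - 2) := by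
  intro S hcard hS E hE
  have hunlabeled : {E' | EdgeSlide S E E'}.ncard = 2 * (S.card - 2) := by
    rw [ncard_edgeSlide_eq_ncard_consecutiveEdges hE hS,
      hE.ncard_consecutiveEdges hS (by omega)]
  exact ⟨hunlabeled, fun L hL => (ncard_labEdgeSlide_eq_ncard_edgeSlide hL).trans hunlabeled⟩
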